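/- Suppose cyclically reduced words $u = a^{n_1} b^{m_1} \cdots a^{n_p} b^{m_p}$ and $v = a^{r_1} b^{s_1} \cdots a^{r_q} b^{s_q}$ (with $p, q \ge 1$ and all exponents nonzero) have conjugates forming a basis of $F(a,b)$. Then, after possibly replacing $a$ by $a^{-1}$ or $b$ by $b^{-1}$ throughout, there exist an integer $t > 0$ and $\varepsilon = \pm 1$ such that either all $m_i$ and $\varepsilon s_j$ equal 1 and $\{n_1, \dots, n_p, \varepsilon r_1, \dots, \varepsilon r_q\} = \{t, t+1\}$ as sets, or symmetrically all $n_i$ and $\varepsilon r_j$ equal 1 and $\{m_1, \dots, m_p, \varepsilon s_1, \dots, \varepsilon s_q\} = \{t, t+1\}$. -/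

import Mathlib

open FreeGroup List

abbrev F2 := FreeGroup (Fin 2)

/-- The generator `a` of `F₂`. -/
def ga : F2 := FreeGroup.of 0

/-- The generator `b` of `F₂`. -/
def gb : F2 := FreeGroup.of 1

/-- `v` contains a block `x^{±k}`: `k` consecutive occurrences of the letter `x`
with the same sign, as a contiguous subword of the reduced word of `v`.
Thus "every `x`-exponent of `v` has absolute value `≤ n`" is `¬ HasBlock x (n+1) v`. -/
def HasBlock (x : Fin 2) (k : ℕ) (v : F2) : Prop :=
  (List.replicate k (x, true)) <:+: v.toWord ∨ (List.replicate k (x, false)) <:+: v.toWord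

/-- A reduced word is cyclically reduced if its last letter is not
the inverse of its first letter. -/
def CyclicallyReduced (l : List (Fin 2 × Bool)) : Prop :=
  ∀ p ∈ l.head?, ∀ q ∈ l.getLast?, q ≠ (p.1, !p.2)

/-- `(x, y)` is a basis of `F₂`: the image of `(a, b)` under an automorphism. -/
def IsBasis (x y : F2) : Prop := ∃ φ : F2 ≃* F2, φ ga = x ∧ φ gb = y

namespace FreeGroup

section LengthFunction

variable {α : Type*} [DecidableEq α]

/-- The length of the longest common prefix of two lists. -/
def lcpLength {β : Type*} [DecidableEq β] : List β → List β → ℕ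
  | a :: l, b :: m => if a = b then lcpLength l m + 1 else 0
  | _, _ => 0

theorem lcpLength_comm {β : Type*} [DecidableEq β] (l m : List β) :
    lcpLength l m = lcpLength m l := by
  induction l generalizing m with
  | nil => cases m <;> rfl
  | cons a l ih =>
    cases m with
    | nil => rfl
    | cons b m => simp only [lcpLength, ih m, eq_comm]

theorem lcpLength_ultrametric {β : Type*} [DecidableEq β] (l m n : List β) :
    min (lcpLength l m) (lcpLength m n) ≤ lcpLength l n := by
  induction l generalizing m n with
  | nil => simp [lcpLength]
  | cons a l ih =>
    cases m with
    | nil => simp [lcpLength]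
    | cons b m =>
      cases n with
      | nil => simp [lcpLength]
      | cons c n =>
        have := ih m n
        simp only [lcpLength]
        split_ifs <;> simp_all

theorem IsReduced.invRev {l : List (α × Bool)} (h : IsReduced l) :
    IsReduced (FreeGroup.invRev l) := by
  rw [isReduced_iff_reduce_eq, reduce_invRev, h.reduce_eq]

theorem IsReduced.toWord_mk {l : List (α × Bool)} (h : IsReduced l) : (mk l).toWord = l := by
  rw [FreeGroup.toWord_mk, h.reduce_eq]

theorem norm_inv_mk_mul_mk {l m : List (α × Bool)} (hl : IsReduced l) (hm : IsReduced m) :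
    FreeGroup.norm ((mk l)⁻¹ * mk m) + 2 * lcpLength l m = l.length + m.length := by
  induction l generalizing m with
  | nil => simp [lcpLength, ← one_eq_mk, FreeGroup.norm, hm.toWord_mk]
  | cons a l ih =>
    cases m with
    | nil =>
      simp [lcpLength, ← one_eq_mk, FreeGroup.norm, hl.invRev.reduce_eq]
    | cons b m =>
      by_cases hab : a = b
      · subst hab
        have h1 : ∀ k : List (α × Bool), mk (a :: k) = mk [a] * mk k := fun k => by
          rw [mul_mk]; rfl
        have h2 : (mk (a :: l))⁻¹ * mk (a :: m) = (mk l)⁻¹ * mk m := by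
          rw [h1 l, h1 m]; group
        have := ih (m := m) (List.IsChain.tail hl) (List.IsChain.tail hm)
        rw [h2]
        simp only [lcpLength, if_true, List.length_cons]
        omega
      · have hred : IsReduced (FreeGroup.invRev (a :: l) ++ b :: m) := by
          refine List.isChain_append.2 ⟨hl.invRev, hm, ?_⟩
          intro x hx y hy
          simp only [FreeGroup.invRev, List.map_cons, List.reverse_cons, List.getLast?_concat,
            Option.mem_def, Option.some.injEq, List.head?_cons] at hx hy
          subst hx hy
          intro h
          have : a.2 ≠ b.2 := fun h' => hab (Prod.ext h h')
          revert this
          cases a.2 <;> cases b.2 <;> simp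
        rw [inv_mk, mul_mk, FreeGroup.norm, hred.toWord_mk]
        simp [lcpLength, hab]

/-- The length of the longest common prefix of the reduced words of `g` and `h`: the Gromov
product of `g` and `h` based at the identity of the Cayley tree. -/
def gromov (g h : FreeGroup α) : ℕ := lcpLength g.toWord h.toWord

theorem norm_inv_mul (g h : FreeGroup α) :
    FreeGroup.norm (g⁻¹ * h) + 2 * gromov g h = FreeGroup.norm g + FreeGroup.norm h := by
  have := norm_inv_mk_mul_mk (isReduced_toWord (x := g)) (isReduced_toWord (x := h))
  rwa [mk_toWord, mk_toWord] at this

theorem norm_mul_eq (g h : FreeGroup α) :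
    FreeGroup.norm (g * h) + 2 * gromov g⁻¹ h = FreeGroup.norm g + FreeGroup.norm h := by
  simpa using norm_inv_mul g⁻¹ h

theorem gromov_comm (g h : FreeGroup α) : gromov g h = gromov h g := lcpLength_comm _ _

theorem gromov_ultrametric (g h k : FreeGroup α) :
    min (gromov g h) (gromov h k) ≤ gromov g k := lcpLength_ultrametric _ _ _

theorem exists_first_letter {g : FreeGroup α} (hg : g ≠ 1) :
    ∃ e : FreeGroup α, FreeGroup.norm e = 1 ∧ gromov e g = 1 := by
  obtain ⟨x, l, h⟩ := List.exists_cons_of_ne_nil (mt toWord_eq_nil_iff.1 hg)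
  have hx : (mk [x]).toWord = [x] := IsReduced.toWord_mk IsReduced.singleton
  refine ⟨mk [x], by simp [FreeGroup.norm, hx], by simp [gromov, hx, h, lcpLength]⟩

theorem two_mul_gromov_inv_self_lt {g : FreeGroup α} (hg : g ≠ 1) :
    2 * gromov g⁻¹ g < FreeGroup.norm g := by
  have h1 := norm_mul_eq g g
  suffices FreeGroup.norm g < FreeGroup.norm (g * g) by omega
  have hred := isReduced_toWord (x := g)
  have h2 := reduceCyclically.reduce_flatten_replicate_succ hred 1
  have h3 := reduceCyclically.conj_conjugator_reduceCyclically g.toWord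
  have h4 : (g * g).toWord = reduce (List.replicate (1 + 1) g.toWord).flatten := by
    rw [toWord_mul]; simp [List.replicate]
  have h5 : reduceCyclically g.toWord ≠ [] := by
    intro h
    rw [h, List.append_nil] at h3
    have : mk g.toWord = 1 := by
      rw [← h3, ← mul_mk, ← inv_mk, mul_inv_cancel]
    exact hg (by rwa [mk_toWord] at this)
  have h6 := List.length_pos_of_ne_nil h5
  have h7 := congrArg List.length h3
  rw [FreeGroup.norm, FreeGroup.norm, h4, h2]
  simp only [List.length_append, List.length_flatten, List.map_replicate, List.sum_replicate,
    smul_eq_mul] at h7 ⊢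
  omega

theorem norm_conj_le_of_gromov {e g : FreeGroup α} (he : FreeGroup.norm e = 1)
    (h : 1 ≤ gromov e g) : FreeGroup.norm (e⁻¹ * g * e) ≤ FreeGroup.norm g := by
  have h1 := norm_inv_mul e g
  have h2 := norm_mul_le (e⁻¹ * g) e
  omega

theorem norm_conj_add_two_le {e g : FreeGroup α} (he : FreeGroup.norm e = 1)
    (hg : 2 ≤ FreeGroup.norm g) (h : 1 ≤ gromov e g) (h' : 1 ≤ gromov e g⁻¹) :
    FreeGroup.norm (e⁻¹ * g * e) + 2 ≤ FreeGroup.norm g := by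
  have h1 := norm_inv_mul e g
  have h2 := norm_inv_mul (g⁻¹ * e) g⁻¹
  have h3 := gromov_ultrametric (g⁻¹ * e) g⁻¹ e
  have h4 := norm_inv_mul (g⁻¹ * e) e
  have h5 : FreeGroup.norm (g⁻¹ * e) = FreeGroup.norm (e⁻¹ * g) := by
    rw [← norm_inv_eq]; simp
  have h6 : (g⁻¹ * e)⁻¹ * g⁻¹ = e⁻¹ := by group
  have h7 : (g⁻¹ * e)⁻¹ * e = e⁻¹ * g * e := by group
  rw [h6, norm_inv_eq, norm_inv_eq] at h2
  rw [h7] at h4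
  rw [gromov_comm e] at h'
  omega

end LengthFunction

end FreeGroup

namespace FreeGroup

section NielsenReduction

variable {α ι : Type*} [DecidableEq α]

/-- Nielsen reducedness of the family `v`, indexed by letters, phrased by Gromov products. -/
structure IsNielsenReduced (v : ι × Bool → FreeGroup α) : Prop where
  ne_one : ∀ l, v l ≠ 1
  two_mul_gromov_le : ∀ l l', (l.1 = l'.1 → l.2 = l'.2) →
    2 * gromov (v l)⁻¹ (v l') ≤ FreeGroup.norm (v l) ∧
      2 * gromov (v l)⁻¹ (v l') ≤ FreeGroup.norm (v l')
  gromov_add_gromov_lt : ∀ l l' l'', (l.1 = l'.1 → l.2 = l'.2) → (l'.1 = l''.1 → l'.2 = l''.2) →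
    gromov (v l)⁻¹ (v l') + gromov (v l')⁻¹ (v l'') < FreeGroup.norm (v l')

namespace IsNielsenReduced

variable {v : ι × Bool → FreeGroup α}

theorem gromov_prod_le (hv : IsNielsenReduced v) (L : List (ι × Bool)) :
    ∀ l l', IsReduced (l :: l' :: L) →
      gromov (v l)⁻¹ ((l' :: L).map v).prod ≤ gromov (v l)⁻¹ (v l') := by
  induction L with
  | nil => intro l l' _; simp
  | cons l'' L ih =>
    intro l l' h
    obtain ⟨h1, h2⟩ := isReduced_cons_cons.1 h
    obtain ⟨h3, -⟩ := isReduced_cons_cons.1 h2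
    have ih := ih l' l'' h2
    have hlt := hv.gromov_add_gromov_lt l l' l'' h1 h3
    rw [List.map_cons, List.prod_cons]
    generalize ((l'' :: L).map v).prod = f at *
    have e1 := norm_mul_eq (v l') f
    have e2 := norm_inv_mul (v l') (v l' * f)
    rw [inv_mul_cancel_left] at e2
    have e3 := gromov_ultrametric (v l)⁻¹ (v l' * f) (v l')
    rw [gromov_comm (v l' * f)] at e3
    omega

theorem norm_le_norm_prod (hv : IsNielsenReduced v) (L : List (ι × Bool)) :
    ∀ l, IsReduced (l :: L) → FreeGroup.norm (v l) ≤ FreeGroup.norm ((l :: L).map v).prod ∧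
      FreeGroup.norm (L.map v).prod ≤ FreeGroup.norm ((l :: L).map v).prod := by
  induction L with
  | nil => intro l _; simp
  | cons l' L ih =>
    intro l h
    obtain ⟨h1, h2⟩ := isReduced_cons_cons.1 h
    have ih := (ih l' h2).1
    have hg := hv.gromov_prod_le L l l' h
    have hn := hv.two_mul_gromov_le l l' h1
    rw [List.map_cons, List.prod_cons]
    generalize ((l' :: L).map v).prod = f at *
    have e1 := norm_mul_eq (v l) f
    omega

theorem eq_singleton_of_norm_prod_eq_one (hv : IsNielsenReduced v) {L : List (ι × Bool)}
    (hL : IsReduced L) (h : FreeGroup.norm (L.map v).prod = 1) : ∃ l, L = [l] := by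
  match L, hL, h with
  | [], _, h => simp at h
  | [l], _, _ => exact ⟨l, rfl⟩
  | l :: l' :: L, hL, h =>
    exfalso
    obtain ⟨h1, h2⟩ := isReduced_cons_cons.1 hL
    have i1 := hv.norm_le_norm_prod _ l hL
    have i2 := hv.norm_le_norm_prod _ l' h2
    have hg := hv.gromov_prod_le L l l' hL
    have hn := hv.two_mul_gromov_le l l' h1
    have n1 := mt norm_eq_zero.1 (hv.ne_one l)
    have n2 := mt norm_eq_zero.1 (hv.ne_one l')
    rw [List.map_cons, List.prod_cons] at h i1
    generalize ((l' :: L).map v).prod = f at *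
    have e1 := norm_mul_eq (v l) f
    omega

end IsNielsenReduced

/-- A relation on pairs closed under the elementary Nielsen moves and simultaneous conjugation. -/
structure NielsenClosed {G : Type*} [Group G] (S : G → G → Prop) : Prop where
  swap : ∀ {x y}, S x y → S y x
  inv_left : ∀ {x y}, S x y → S x⁻¹ y
  mul_left : ∀ {x y}, S x y → S x (x * y)
  conj : ∀ {x y} (g : G), S x y → S (g⁻¹ * x * g) (g⁻¹ * y * g)

/-- A pair of minimal total length among those in `S`. -/
def IsMinimalPair (S : FreeGroup α → FreeGroup α → Prop) (x y : FreeGroup α) : Prop :=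
  S x y ∧ ∀ x' y', S x' y' →
    FreeGroup.norm x + FreeGroup.norm y ≤ FreeGroup.norm x' + FreeGroup.norm y'

namespace IsMinimalPair

variable {S : FreeGroup α → FreeGroup α → Prop} {x y : FreeGroup α}

theorem swap (hS : NielsenClosed S) (h : IsMinimalPair S x y) : IsMinimalPair S y x :=
  ⟨hS.swap h.1, fun x' y' h' => by have := h.2 x' y' h'; omega⟩

theorem inv_left (hS : NielsenClosed S) (h : IsMinimalPair S x y) : IsMinimalPair S x⁻¹ y :=
  ⟨hS.inv_left h.1, fun x' y' h' => by have := h.2 x' y' h'; rwa [norm_inv_eq]⟩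

theorem inv_right (hS : NielsenClosed S) (h : IsMinimalPair S x y) : IsMinimalPair S x y⁻¹ :=
  ((h.swap hS).inv_left hS).swap hS

theorem two_mul_gromov_le_right (hS : NielsenClosed S) (h : IsMinimalPair S x y) :
    2 * gromov x⁻¹ y ≤ FreeGroup.norm x := by
  have h1 := h.2 _ _ (hS.mul_left h.1)
  have h2 := norm_mul_eq x y
  omega

theorem two_mul_gromov_le_left (hS : NielsenClosed S) (h : IsMinimalPair S x y) :
    2 * gromov x⁻¹ y ≤ FreeGroup.norm y := by
  have := ((h.inv_left hS).inv_right hS).swap hS |>.two_mul_gromov_le_right hS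
  rwa [inv_inv, norm_inv_eq, gromov_comm] at this

theorem gromov_add_gromov_lt (hS : NielsenClosed S) (h : IsMinimalPair S x y)
    (hx : x ≠ 1) (hxy : x * y ≠ 1) :
    gromov y⁻¹ x + gromov x⁻¹ y < FreeGroup.norm x := by
  by_contra hlt
  have i1 := h.two_mul_gromov_le_right hS
  have i2 := h.two_mul_gromov_le_left hS
  have i3 := (h.swap hS).two_mul_gromov_le_left hS
  obtain ⟨e, he, hex⟩ := exists_first_letter hx
  have n1 := mt norm_eq_zero.1 hx
  have n2 := mt norm_eq_zero.1 hxy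
  have e1 := norm_mul_eq x y
  have u1 := gromov_ultrametric e x y⁻¹
  rw [gromov_comm x] at u1
  have k1 := norm_inv_mul (x * y) x
  have k1' : FreeGroup.norm ((x * y)⁻¹ * x) = FreeGroup.norm y := by
    rw [← norm_inv_eq]; congr 1; group
  have k2 := norm_inv_mul (x * y)⁻¹ y⁻¹
  have k2' : (x * y)⁻¹⁻¹ * y⁻¹ = x := by group
  rw [k2', norm_inv_eq, norm_inv_eq] at k2
  have u2 := gromov_ultrametric e x (x * y)
  rw [gromov_comm x] at u2
  have u3 := gromov_ultrametric e y⁻¹ (x * y)⁻¹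
  rw [gromov_comm y⁻¹] at u3
  have c1 := norm_conj_le_of_gromov (g := x) he (by omega)
  have c2 := norm_conj_add_two_le (g := x * y) he (by omega) (by omega) (by omega)
  have := h.2 _ _ (hS.conj e (hS.mul_left h.1))
  omega

end IsMinimalPair

variable {S : FreeGroup α → FreeGroup α → Prop}

/-- The elements `x`, `x⁻¹`, `y`, `y⁻¹` indexed by the letters of the free group of rank two. -/
def letterValue {G : Type*} [Group G] (x y : G) (l : Fin 2 × Bool) : G :=
  cond l.2 (![x, y] l.1) (![x, y] l.1)⁻¹

theorem IsMinimalPair.isNielsenReduced {x y : FreeGroup α} (hS : NielsenClosed S)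
    (hcomm : ∀ x y, S x y → x * y ≠ y * x) (h : IsMinimalPair S x y) :
    IsNielsenReduced (letterValue x y) := by
  have hpair : ∀ l l' : Fin 2 × Bool, l.1 ≠ l'.1 →
      IsMinimalPair S (letterValue x y l) (letterValue x y l') := by
    have h' := h.swap hS
    rintro ⟨i, b⟩ ⟨j, c⟩ hij
    fin_cases i <;> fin_cases j <;> first | exact absurd rfl hij | skip
    all_goals
      cases b <;> cases c <;> simp only [letterValue, cond] <;>
        first
        | exact h | exact h.inv_left hS | exact h.inv_right hS
        | exact (h.inv_left hS).inv_right hS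
        | exact h' | exact h'.inv_left hS | exact h'.inv_right hS
        | exact (h'.inv_left hS).inv_right hS
  have hne : ∀ l, letterValue x y l ≠ 1 := by
    rintro ⟨i, b⟩ h1
    have := hcomm _ _ (hpair (i, b) (i + 1, b) (by fin_cases i <;> simp)).1
    simp [h1] at this
  have hself := fun l => two_mul_gromov_inv_self_lt (hne l)
  have hinv : ∀ i b, letterValue x y (i, !b) = (letterValue x y (i, b))⁻¹ := by
    intro i b; cases b <;> simp [letterValue]
  have hle : ∀ l l' : Fin 2 × Bool, (l.1 = l'.1 → l.2 = l'.2) →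
      2 * gromov (letterValue x y l)⁻¹ (letterValue x y l') ≤ FreeGroup.norm (letterValue x y l) ∧
      2 * gromov (letterValue x y l)⁻¹ (letterValue x y l')
        ≤ FreeGroup.norm (letterValue x y l') := by
    intro l l' hl
    by_cases hi : l.1 = l'.1
    · obtain rfl : l = l' := Prod.ext hi (hl hi)
      exact ⟨(hself l).le, (hself l).le⟩
    · exact ⟨(hpair l l' hi).two_mul_gromov_le_right hS, (hpair l l' hi).two_mul_gromov_le_left hS⟩
  refine ⟨hne, hle, fun l l' l'' h1 h2 => ?_⟩
  have b1 := (hle l l' h1).2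
  have b2 := (hle l' l'' h2).1
  have hs := hself l'
  by_cases hi : l.1 = l'.1
  · obtain rfl : l = l' := Prod.ext hi (h1 hi)
    omega
  by_cases hi' : l'.1 = l''.1
  · obtain rfl : l' = l'' := Prod.ext hi' (h2 hi')
    omega
  have hij : l.1 = l''.1 := by omega
  by_cases hb : l.2 = l''.2
  · obtain rfl : l = l'' := Prod.ext hij hb
    have hp := hpair l' l hi'
    refine hp.gromov_add_gromov_lt hS (hne l') fun h1 => hcomm _ _ hp.1 ?_
    exact h1.trans (mul_eq_one_comm.1 h1).symm
  · obtain ⟨i, b⟩ := l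
    obtain ⟨j, c⟩ := l''
    obtain rfl : i = j := hij
    obtain rfl : b = !c := Bool.eq_not.2 hb
    rw [hinv, inv_inv] at b1 ⊢
    have := gromov_ultrametric (letterValue x y l')⁻¹ (letterValue x y (i, c)) (letterValue x y l')
    omega

end NielsenReduction

end FreeGroup

/-- The pairs obtained from `(a^±1, b^±1)` by positive elementary Nielsen moves. -/
inductive PositivePair : F2 → F2 → Prop
  | base (δ γ : ℤ) (hδ : δ = 1 ∨ δ = -1) (hγ : γ = 1 ∨ γ = -1) : PositivePair (ga ^ δ) (gb ^ γ)
  | mul_right {x y : F2} : PositivePair x y → PositivePair x (x * y)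
  | mul_left {x y : F2} : PositivePair x y → PositivePair (x * y) y

/-- `x` is `y` or its inverse. -/
def EqOrInv {G : Type*} [Group G] (x y : G) : Prop := x = y ∨ x = y⁻¹

namespace EqOrInv

variable {G : Type*} [Group G] {x y z : G}

theorem inv_right (h : EqOrInv x y) : EqOrInv x y⁻¹ := by
  rcases h with rfl | rfl
  · exact .inr (inv_inv _).symm
  · exact .inl rfl

end EqOrInv

/-- `(x, y)` agrees with a positive pair up to simultaneous conjugation, inversion of the
entries, and exchange of the entries. -/
def PositivizablePair (x y : F2) : Prop :=
  ∃ X Y g : F2, PositivePair X Y ∧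
    (EqOrInv X (g⁻¹ * x * g) ∧ EqOrInv Y (g⁻¹ * y * g) ∨
      EqOrInv Y (g⁻¹ * x * g) ∧ EqOrInv X (g⁻¹ * y * g))

namespace PositivizablePair

variable {x y : F2}

theorem of_positivePair (h : PositivePair x y) : PositivizablePair x y :=
  ⟨x, y, 1, h, .inl ⟨.inl (by simp), .inl (by simp)⟩⟩

theorem swap (h : PositivizablePair x y) : PositivizablePair y x := by
  obtain ⟨X, Y, g, hp, h⟩ := h
  exact ⟨X, Y, g, hp, h.symm.imp And.symm And.symm⟩

theorem inv_left (h : PositivizablePair x y) : PositivizablePair x⁻¹ y := by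
  obtain ⟨X, Y, g, hp, h⟩ := h
  have e : g⁻¹ * x⁻¹ * g = (g⁻¹ * x * g)⁻¹ := by group
  refine ⟨X, Y, g, hp, ?_⟩
  rw [e]
  exact h.imp (And.imp_left EqOrInv.inv_right) (And.imp_left EqOrInv.inv_right)

theorem inv_right (h : PositivizablePair x y) : PositivizablePair x y⁻¹ := h.swap.inv_left.swap

theorem conj (k : F2) (h : PositivizablePair x y) :
    PositivizablePair (k⁻¹ * x * k) (k⁻¹ * y * k) := by
  obtain ⟨X, Y, g, hp, h⟩ := h
  refine ⟨X, Y, k⁻¹ * g, hp, ?_⟩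
  have e : ∀ z, (k⁻¹ * g)⁻¹ * (k⁻¹ * z * k) * (k⁻¹ * g) = g⁻¹ * z * g := fun z => by group
  rwa [e, e]

theorem of_conj (k : F2) (h : PositivizablePair (k⁻¹ * x * k) (k⁻¹ * y * k)) :
    PositivizablePair x y := by
  have := h.conj k⁻¹
  have e : ∀ z, k⁻¹⁻¹ * (k⁻¹ * z * k) * k⁻¹ = z := fun z => by group
  rwa [e, e] at this

theorem of_inv_left (h : PositivizablePair x⁻¹ y) : PositivizablePair x y := by
  simpa using h.inv_left

theorem of_inv_right (h : PositivizablePair x y⁻¹) : PositivizablePair x y := by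
  simpa using h.inv_right

theorem left_inv_mul (h : PositivePair x y) : PositivizablePair x (x⁻¹ * y) := by
  cases h with
  | base δ γ hδ hγ =>
    refine of_inv_left ?_
    rw [← zpow_neg]
    exact of_positivePair (.mul_right (.base (-δ) γ (by omega) hγ))
  | mul_right h => simpa using of_positivePair h
  | @mul_left x y h =>
    refine of_inv_right (of_conj y⁻¹ (of_conj x⁻¹ ?_))
    convert (of_positivePair h.mul_right).swap using 1 <;> group

theorem right_inv_mul (h : PositivePair x y) : PositivizablePair y (y⁻¹ * x) := by
  cases h with
  | base δ γ hδ hγ =>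
    refine of_inv_left (of_conj (gb ^ (-γ)) ?_)
    convert (of_positivePair (.mul_left (.base δ (-γ) hδ (by omega)))).swap using 1 <;> group
  | @mul_right x y h =>
    refine of_inv_right ?_
    convert of_positivePair h.mul_left using 1
    group
  | @mul_left x y h =>
    refine of_conj y⁻¹ ?_
    convert (of_positivePair h).swap using 1 <;> group

theorem left_mul_of_eqOrInv {z w : F2} (h : PositivizablePair z (z * w))
    (h' : PositivizablePair z (z⁻¹ * w)) (hx : EqOrInv z x) (hy : EqOrInv w y) :
    PositivizablePair x (x * y) := by
  rcases hx with rfl | rfl <;> rcases hy with rfl | rfl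
  · exact h
  · refine of_inv_right (of_conj z ?_)
    convert h' using 1 <;> group
  · refine of_inv_left ?_
    simpa using h'
  · refine of_inv_left (of_inv_right (of_conj x ?_))
    convert h using 1 <;> group

theorem mul_left (h : PositivizablePair x y) : PositivizablePair x (x * y) := by
  obtain ⟨X, Y, g, hp, h⟩ := h
  refine of_conj g ?_
  have e : g⁻¹ * (x * y) * g = (g⁻¹ * x * g) * (g⁻¹ * y * g) := by group
  rw [e]
  rcases h with ⟨hx, hy⟩ | ⟨hx, hy⟩
  · exact left_mul_of_eqOrInv (of_positivePair hp.mul_right) (left_inv_mul hp) hx hy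
  · refine left_mul_of_eqOrInv (of_conj Y ?_) (right_inv_mul hp) hx hy
    convert (of_positivePair hp.mul_left).swap using 1 <;> group

end PositivizablePair

/-- The pair `(x, y)` generates the group. -/
def GeneratingPair {G : Type*} [Group G] (x y : G) : Prop :=
  ∀ H : Subgroup G, x ∈ H → y ∈ H → H = ⊤

theorem GeneratingPair.nielsenClosed {G : Type*} [Group G] :
    FreeGroup.NielsenClosed (GeneratingPair (G := G)) where
  swap h H hx hy := h H hy hx
  inv_left h H hx hy := h H (by simpa using H.inv_mem hx) hy
  mul_left h H hx hy := h H hx ((H.mul_mem_cancel_left hx).1 hy)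
  conj {x y} g h H hx hy := by
    have h1 : H.comap (MulAut.conj g⁻¹).toMonoidHom = ⊤ :=
      h _ (by simpa [MulAut.conj_apply] using hx) (by simpa [MulAut.conj_apply] using hy)
    refine eq_top_iff.2 fun z _ => ?_
    have : g * z * g⁻¹ ∈ H.comap (MulAut.conj g⁻¹).toMonoidHom := h1 ▸ Subgroup.mem_top _
    simpa [MulAut.conj_apply, mul_assoc] using this

theorem subgroup_eq_top_of_mem {H : Subgroup F2} (ha : ga ∈ H) (hb : gb ∈ H) : H = ⊤ := by
  rw [eq_top_iff, ← FreeGroup.closure_range_of, Subgroup.closure_le]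
  rintro _ ⟨i, rfl⟩
  fin_cases i
  · exact ha
  · exact hb

theorem IsBasis.generatingPair {x y : F2} (h : IsBasis x y) : GeneratingPair x y := by
  obtain ⟨φ, rfl, rfl⟩ := h
  intro H hx hy
  have h1 : H.comap φ.toMonoidHom = ⊤ := subgroup_eq_top_of_mem hx hy
  refine eq_top_iff.2 fun z _ => ?_
  have : φ.symm z ∈ H.comap φ.toMonoidHom := h1 ▸ Subgroup.mem_top _
  simpa using this

theorem GeneratingPair.mul_ne_mul {x y : F2} (h : GeneratingPair x y) : x * y ≠ y * x := by
  intro hxy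
  have h1 : Subgroup.centralizer {x, y} = (⊤ : Subgroup F2) := by
    apply h <;> simp [Subgroup.mem_centralizer_iff, hxy]
  have h2 : Subgroup.center F2 = ⊤ := by
    apply h <;> refine Subgroup.mem_center_iff.2 fun g => ?_
    all_goals
      have := Subgroup.mem_centralizer_iff.1
        (h1 ▸ Subgroup.mem_top g : g ∈ Subgroup.centralizer {x, y})
    · exact (this x (by simp)).symm
    · exact (this y (by simp)).symm
  have := Subgroup.mem_center_iff.1 (h2 ▸ Subgroup.mem_top ga : ga ∈ Subgroup.center F2) gb
  revert this
  decide

theorem PositivizablePair.of_letterValue {x y : F2} {l l' : Fin 2 × Bool}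
    (ha : ga = FreeGroup.letterValue x y l) (hb : gb = FreeGroup.letterValue x y l') :
    PositivizablePair x y := by
  have base : PositivizablePair ga gb := by
    simpa using of_positivePair (.base 1 1 (.inl rfl) (.inl rfl))
  rw [ha, hb] at base
  have hne : ga ≠ gb ∧ ga ≠ gb⁻¹ := by decide
  rw [ha, hb] at hne
  obtain ⟨i, b⟩ := l
  obtain ⟨j, c⟩ := l'
  fin_cases i <;> fin_cases j <;> cases b <;> cases c <;>
    simp [FreeGroup.letterValue] at base hne <;>
    first
    | exact base | exact base.of_inv_left | exact base.of_inv_right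
    | exact base.of_inv_left.of_inv_right
    | exact base.swap | exact base.of_inv_left.swap | exact base.of_inv_right.swap
    | exact base.of_inv_left.of_inv_right.swap

/-- Nielsen's theorem in rank two: every generating pair of `F₂` is positivizable. -/
theorem GeneratingPair.positivizablePair {x y : F2} (h : GeneratingPair x y) :
    PositivizablePair x y := by
  by_contra hxy
  let S : F2 → F2 → Prop := fun x y => GeneratingPair x y ∧ ¬ PositivizablePair x y
  have hS : FreeGroup.NielsenClosed S :=
    { swap := fun h => ⟨GeneratingPair.nielsenClosed.swap h.1, fun h' => h.2 h'.swap⟩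
      inv_left := fun h => ⟨GeneratingPair.nielsenClosed.inv_left h.1, fun h' => h.2 h'.of_inv_left⟩
      mul_left := fun h => ⟨GeneratingPair.nielsenClosed.mul_left h.1, fun h' =>
        h.2 (by simpa using h'.inv_left.mul_left.of_inv_left)⟩
      conj := fun g h => ⟨GeneratingPair.nielsenClosed.conj g h.1, fun h' => h.2 (h'.of_conj g)⟩ }
  obtain ⟨⟨x₀, y₀⟩, h₀, hmin⟩ := exists_minimalFor_of_wellFoundedLT (fun p : F2 × F2 => S p.1 p.2)
    (fun p => FreeGroup.norm p.1 + FreeGroup.norm p.2) ⟨(x, y), h, hxy⟩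
  have hm : FreeGroup.IsMinimalPair S x₀ y₀ :=
    ⟨h₀, fun x' y' h' => (le_total _ _).elim id (hmin (j := (x', y')) h')⟩
  have hr := hm.isNielsenReduced hS fun _ _ h => h.1.mul_ne_mul
  have hsurj : ∀ z : F2, FreeGroup.norm z = 1 → ∃ l, z = FreeGroup.letterValue x₀ y₀ l := by
    intro z hz
    have hz' : z ∈ (FreeGroup.lift ![x₀, y₀] : F2 →* F2).range := by
      rw [h₀.1 (FreeGroup.lift ![x₀, y₀] : F2 →* F2).range
        (MonoidHom.mem_range.2 ⟨FreeGroup.of 0, by simp⟩)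
        (MonoidHom.mem_range.2 ⟨FreeGroup.of 1, by simp⟩)]
      trivial
    obtain ⟨w, rfl⟩ := hz'
    have hw : (FreeGroup.lift ![x₀, y₀] : F2 →* F2) w =
        (w.toWord.map (FreeGroup.letterValue x₀ y₀)).prod := by
      conv_lhs => rw [← FreeGroup.mk_toWord (x := w), FreeGroup.lift_mk]
      rfl
    rw [hw] at hz ⊢
    obtain ⟨l, hl⟩ := hr.eq_singleton_of_norm_prod_eq_one FreeGroup.isReduced_toWord hz
    exact ⟨l, by simp [hl]⟩
  obtain ⟨l, hl⟩ := hsurj ga (FreeGroup.norm_of 0)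
  obtain ⟨l', hl'⟩ := hsurj gb (FreeGroup.norm_of 1)
  exact h₀.2 (.of_letterValue hl hl')

namespace FreeGroup

section CyclicWords

variable {α : Type*}

theorem isCyclicallyReduced_cons_iff {a : α × Bool} {l : List (α × Bool)} :
    IsCyclicallyReduced (a :: l) ↔ IsReduced (a :: l ++ [a]) := by
  rw [isCyclicallyReduced_iff, IsReduced, IsReduced, List.isChain_append]
  simp

theorem isCyclicallyReduced_concat_iff {a : α × Bool} {l : List (α × Bool)} :
    IsCyclicallyReduced (l ++ [a]) ↔ IsReduced (a :: l ++ [a]) := by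
  rw [isCyclicallyReduced_iff, IsReduced, IsReduced, List.cons_append, List.isChain_cons]
  simp only [List.getLast?_concat, Option.mem_def, Option.some.injEq, forall_eq']
  exact and_comm

/-- Conjugate cyclically reduced words are rotations of each other. -/
theorem IsCyclicallyReduced.isRotated_of_conj [DecidableEq α] {u w : List (α × Bool)}
    (g : List (α × Bool)) (hu : IsCyclicallyReduced u) (hw : IsCyclicallyReduced w)
    (hg : IsReduced g) (h : mk u = (mk g)⁻¹ * mk w * mk g) : u ~r w := by
  induction g generalizing w with
  | nil =>
    rw [← one_eq_mk, inv_one, one_mul, mul_one] at h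
    rw [← hu.isReduced.toWord_mk, h, hw.isReduced.toWord_mk]
  | cons x g ih =>
    have hg' : IsReduced g := List.IsChain.tail hg
    have hcons : ∀ (y : α × Bool) (k : List (α × Bool)), mk (y :: k) = mk [y] * mk k :=
      fun y k => by rw [mul_mk]; rfl
    have hxinv : (mk [x])⁻¹ = mk [(x.1, !x.2)] := by simp [inv_mk, FreeGroup.invRev]
    by_cases h1 : w.head? = some x
    · obtain ⟨w', rfl⟩ := List.head?_eq_some_iff.1 h1
      have hw' : IsCyclicallyReduced (w' ++ [x]) :=
        isCyclicallyReduced_concat_iff.2 (isCyclicallyReduced_cons_iff.1 hw)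
      refine (ih hw' hg' ?_).trans ?_
      · rw [h, hcons x g, hcons x w', ← mul_mk]
        group
      · exact List.IsRotated.symm ⟨1, by simp⟩
    by_cases h2 : w.getLast? = some (x.1, !x.2)
    · obtain ⟨w', rfl⟩ := List.getLast?_eq_some_iff.1 h2
      have hw' : IsCyclicallyReduced ((x.1, !x.2) :: w') :=
        isCyclicallyReduced_cons_iff.2 (isCyclicallyReduced_concat_iff.1 hw)
      refine (ih hw' hg' ?_).trans ?_
      · rw [h, hcons x g, hcons _ w', ← mul_mk, ← hxinv]
        group
      · exact ⟨1, by simp⟩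
    by_cases hw0 : w = []
    · subst hw0
      have : mk u = 1 := by rw [h, ← one_eq_mk]; group
      rw [← hu.isReduced.toWord_mk, this, toWord_one]
    exfalso
    have hfirst : IsReduced (FreeGroup.invRev (x :: g) ++ w) := by
      refine List.isChain_append.2 ⟨hg.invRev, hw.isReduced, ?_⟩
      intro y hy z hz
      simp only [FreeGroup.invRev, List.map_cons, List.reverse_cons, List.getLast?_concat,
        Option.mem_def, Option.some.injEq] at hy
      subst hy
      intro hyz
      by_contra hne
      refine h1 ?_
      rw [Option.mem_def.1 hz]
      congr 1
      exact Prod.ext hyz.symm (by simpa [eq_comm] using hne)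
    have hsecond : IsReduced (w ++ (x :: g)) := by
      refine List.isChain_append.2 ⟨hw.isReduced, hg, ?_⟩
      intro y hy z hz
      simp only [List.head?_cons, Option.mem_def, Option.some.injEq] at hz
      subst hz
      intro hyz
      by_contra hne
      refine h2 ?_
      rw [Option.mem_def.1 hy]
      congr 1
      exact Prod.ext hyz (Bool.eq_not.2 hne)
    have hred := IsReduced.append_overlap hfirst hsecond hw0
    have hword : u = FreeGroup.invRev (x :: g) ++ w ++ (x :: g) := by
      rw [← hu.isReduced.toWord_mk, h, inv_mk, mul_mk, mul_mk, hred.toWord_mk]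
    obtain ⟨g', z, hz⟩ := (List.eq_nil_or_concat (x :: g)).resolve_left (by simp)
    rw [hz, List.concat_eq_append] at hword
    have := hu.2 z (by rw [hword, ← List.append_assoc]; simp) (z.1, !z.2)
      (by rw [hword]; simp [FreeGroup.invRev])
    simp at this

/-- The reduced word of `of i ^ n`. -/
def syllable (i : α) (n : ℤ) : List (α × Bool) := List.replicate n.natAbs (i, decide (0 < n))

theorem exists_syllable_eq (i : α) {n : ℤ} (hn : n ≠ 0) :
    ∃ k, n.natAbs = k + 1 ∧ syllable i n = List.replicate (k + 1) (i, decide (0 < n)) :=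
  ⟨n.natAbs - 1, by omega, by rw [syllable]; congr 1; omega⟩

theorem mk_syllable (i : α) (n : ℤ) : mk (syllable i n) = of i ^ n := by
  have hpow : ∀ (b : Bool) (k : ℕ), mk (List.replicate k (i, b)) = mk [(i, b)] ^ k := by
    intro b k
    induction k with
    | zero => rfl
    | succ k ih => rw [pow_succ', ← ih, mul_mk]; rfl
  rw [syllable, hpow]
  rcases lt_or_ge 0 n with h | h
  · rw [decide_eq_true h]
    conv_rhs => rw [show n = (n.natAbs : ℤ) by omega, zpow_natCast]
    rfl
  · rw [decide_eq_false (by omega)]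
    conv_rhs => rw [show n = -(n.natAbs : ℤ) by omega, zpow_neg, zpow_natCast, ← inv_pow]
    rfl

/-- The concatenation of the syllables described by a list of bases and exponents. -/
def syllableWord (rs : List (α × ℤ)) : List (α × Bool) := rs.flatMap fun r => syllable r.1 r.2

/-- Consecutive syllables have different bases, and all exponents are nonzero. -/
def IsSyllableList (rs : List (α × ℤ)) : Prop :=
  (rs.IsChain fun r r' => r.1 ≠ r'.1) ∧ ∀ r ∈ rs, r.2 ≠ 0

theorem IsSyllableList.isReduced {rs : List (α × ℤ)} (h : IsSyllableList rs) :
    IsReduced (syllableWord rs) := by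
  rw [syllableWord, List.flatMap_def, IsReduced, List.isChain_flatten]
  · constructor
    · simp only [List.mem_map, forall_exists_index, and_imp, forall_apply_eq_imp_iff₂]
      intro r _
      exact List.isChain_replicate_of_rel _ fun _ => rfl
    · rw [List.isChain_map]
      refine h.1.imp fun r r' hrr' x hx y hy hxy => ?_
      have h1 := List.eq_of_mem_replicate (List.mem_of_mem_getLast? hx)
      have h2 := List.eq_of_mem_replicate (List.mem_of_mem_head? hy)
      exact absurd (by simpa [h1, h2] using hxy) hrr'
  · simp only [List.mem_map, not_exists, not_and]
    intro r hr h0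
    obtain ⟨k, -, hk⟩ := exists_syllable_eq r.1 (h.2 r hr)
    simp [hk] at h0

theorem replicate_prefix_replicate {β : Type*} {c d y : β} {k m : ℕ} {W : List β}
    (hW : d ∉ W.head?) (hy : y ≠ c)
    (h : List.replicate (k + 1) c ++ [y] <+: List.replicate (m + 1) d ++ W) : c = d ∧ k = m := by
  induction k generalizing m with
  | zero =>
    rw [List.replicate_succ, List.replicate_succ, List.cons_append, List.cons_append,
      List.cons_prefix_cons] at h
    obtain ⟨rfl, h⟩ := h
    cases m with
    | zero => exact ⟨rfl, rfl⟩
    | succ m =>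
      simp [List.replicate_succ, List.cons_prefix_cons] at h
      exact absurd h hy
  | succ k ih =>
    change c :: (List.replicate (k + 1) c ++ [y]) <+: d :: (List.replicate m d ++ W) at h
    rw [List.cons_prefix_cons] at h
    obtain ⟨rfl, h⟩ := h
    cases m with
    | zero =>
      cases W with
      | nil => simp at h
      | cons z W =>
        simp [List.replicate_succ, List.cons_prefix_cons] at h
        simp [h.1] at hW
    | succ m =>
      exact ⟨rfl, by have := (ih h).2; omega⟩

theorem infix_replicate_append {β : Type*} {c d x : β} {k : ℕ} {P W : List β} (hxc : x ≠ c)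
    (h : x :: c :: P <:+: List.replicate k d ++ W) :
    c :: P <+: W ∨ x :: c :: P <:+: W := by
  induction k with
  | zero => exact .inr (by simpa using h)
  | succ k ih =>
    rw [List.replicate_succ, List.cons_append, List.infix_cons_iff, List.cons_prefix_cons] at h
    rcases h with ⟨rfl, h⟩ | h
    · cases k with
      | zero => exact .inl (by simpa using h)
      | succ k =>
        rw [List.replicate_succ, List.cons_append, List.cons_prefix_cons] at h
        exact absurd h.1.symm hxc
    · exact ih h

theorem IsSyllableList.mem_of_infix_word {rs : List (α × ℤ)}
    (h : IsSyllableList rs) {i : α} {n : ℤ} (hn : n ≠ 0) {x y : α × Bool} (hx : x.1 ≠ i)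
    (hy : y.1 ≠ i) (hinf : [x] ++ syllable i n ++ [y] <:+: syllableWord rs) : (i, n) ∈ rs := by
  induction rs with
  | nil => simp [syllableWord] at hinf
  | cons r rs ih =>
    have hrs : IsSyllableList rs := ⟨h.1.tail, fun r' hr' => h.2 r' (List.mem_cons_of_mem _ hr')⟩
    obtain ⟨k, hk, hk'⟩ := exists_syllable_eq i hn
    rw [hk', syllableWord, List.flatMap_cons, syllable] at hinf
    change _ <:+: _ ++ syllableWord rs at hinf
    rw [List.replicate_succ] at hinf
    simp only [List.cons_append, List.nil_append] at hinf
    rcases infix_replicate_append (fun h => hx (by simp [h])) hinf with hp | hi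
    · cases rs with
      | nil => simp [syllableWord] at hp
      | cons r' rs =>
        obtain ⟨m, hm, hm'⟩ := exists_syllable_eq r'.1 (hrs.2 r' (by simp))
        rw [syllableWord, List.flatMap_cons, hm', ← List.cons_append, ← List.replicate_succ] at hp
        have := replicate_prefix_replicate ?_ (fun h => hy (by simp [h])) hp
        · obtain ⟨h1, h2⟩ := this
          rw [Prod.mk.injEq, decide_eq_decide] at h1
          have : (i, n) = r' := Prod.ext h1.1 (by have := hrs.2 r' (by simp); dsimp only; omega)
          simp [this]
        · cases rs with
          | nil => simp
          | cons r'' rs =>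
            obtain ⟨m', -, hm''⟩ := exists_syllable_eq r''.1 (hrs.2 r'' (by simp))
            have := (List.isChain_cons_cons.1 hrs.1).1
            simp [hm'', List.replicate_succ, this.symm]
    · refine List.mem_cons_of_mem _ (ih hrs ?_)
      rw [hk', List.replicate_succ]
      simpa using hi

theorem IsSyllableList.exists_infix_word {rs : List (α × ℤ)}
    (h : IsSyllableList rs) {i j j' : α}
    {n m m' : ℤ} (hinf : [(j, m), (i, n), (j', m')] <:+: rs) :
    ∃ x y : α × Bool, x.1 ≠ i ∧ y.1 ≠ i ∧ [x] ++ syllable i n ++ [y] <:+: syllableWord rs := by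
  have hc := h.1
  obtain ⟨s, t, hst⟩ := id hinf
  rw [← hst] at hc
  replace hc := hc.left_of_append.right_of_append
  simp only [List.isChain_cons_cons] at hc
  have hmem := hinf.subset
  obtain ⟨k, -, hk⟩ := exists_syllable_eq j (h.2 (j, m) (hmem (by simp)))
  obtain ⟨k', -, hk'⟩ := exists_syllable_eq j' (h.2 (j', m') (hmem (by simp)))
  refine ⟨(j, decide (0 < m)), (j', decide (0 < m')), hc.1, hc.2.1.symm, ?_⟩
  refine List.IsInfix.trans ?_ (hinf.flatMap fun r => syllable r.1 r.2)
  simp only [List.flatMap_cons, List.flatMap_nil, List.append_nil, hk, hk']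
  refine ⟨List.replicate k (j, decide (0 < m)), List.replicate k' (j', decide (0 < m')), ?_⟩
  rw [List.replicate_succ', List.replicate_succ]
  simp

end CyclicWords

end FreeGroup

/-- The list of syllables of `∏ a ^ nᵢ b ^ mᵢ`. -/
def blockSyllables (l : List (ℤ × ℤ)) : List (Fin 2 × ℤ) :=
  l.flatMap fun p => [(0, p.1), (1, p.2)]

/-- The word `∏ a ^ nᵢ b ^ mᵢ`. -/
def blockWord (l : List (ℤ × ℤ)) : List (Fin 2 × Bool) := FreeGroup.syllableWord (blockSyllables l)

/-- The group element `∏ a ^ nᵢ b ^ mᵢ`. -/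
def blockProd (l : List (ℤ × ℤ)) : F2 := (l.map fun p => ga ^ p.1 * gb ^ p.2).prod

/-- All exponents in the list are nonzero. -/
def NonzeroBlocks (l : List (ℤ × ℤ)) : Prop := ∀ p ∈ l, p.1 ≠ 0 ∧ p.2 ≠ 0

theorem blockSyllables_append (l l' : List (ℤ × ℤ)) :
    blockSyllables (l ++ l') = blockSyllables l ++ blockSyllables l' := List.flatMap_append

theorem blockWord_cons (p : ℤ × ℤ) (l : List (ℤ × ℤ)) :
    blockWord (p :: l) = FreeGroup.syllable 0 p.1 ++ FreeGroup.syllable 1 p.2 ++ blockWord l := by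
  simp [blockWord, blockSyllables, FreeGroup.syllableWord]

theorem blockWord_append (l l' : List (ℤ × ℤ)) :
    blockWord (l ++ l') = blockWord l ++ blockWord l' := by
  rw [blockWord, blockSyllables_append]
  exact List.flatMap_append

theorem blockWord_flatten_replicate (l : List (ℤ × ℤ)) (N : ℕ) :
    blockWord (List.replicate N l).flatten = (List.replicate N (blockWord l)).flatten := by
  induction N with
  | zero => rfl
  | succ N ih => rw [List.replicate_succ, List.replicate_succ, List.flatten_cons, List.flatten_cons,
      blockWord_append, ih]

theorem mk_blockWord (l : List (ℤ × ℤ)) : FreeGroup.mk (blockWord l) = blockProd l := by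
  induction l with
  | nil => rfl
  | cons p l ih =>
    rw [blockWord_cons, ← FreeGroup.mul_mk, ← FreeGroup.mul_mk, FreeGroup.mk_syllable,
      FreeGroup.mk_syllable, ih]
    simp [blockProd, ga, gb]

theorem NonzeroBlocks.isSyllableList {l : List (ℤ × ℤ)} (hl : NonzeroBlocks l) :
    FreeGroup.IsSyllableList (blockSyllables l) := by
  constructor
  · rw [blockSyllables, List.flatMap_def, List.isChain_flatten (by simp)]
    constructor
    · simp only [List.mem_map]
      rintro _ ⟨p, -, rfl⟩
      simp
    · rw [List.isChain_map]
      induction l with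
      | nil => simp
      | cons p l ih =>
        refine List.isChain_cons.2 ⟨by simp, ih fun q hq => hl q (List.mem_cons_of_mem _ hq)⟩
  · intro r hr
    simp only [blockSyllables, List.mem_flatMap, List.mem_cons, List.not_mem_nil, or_false] at hr
    obtain ⟨p, hp, rfl | rfl⟩ := hr
    · exact (hl p hp).1
    · exact (hl p hp).2

theorem NonzeroBlocks.isCyclicallyReduced {l : List (ℤ × ℤ)} (hl : NonzeroBlocks l) :
    FreeGroup.IsCyclicallyReduced (blockWord l) := by
  refine ⟨hl.isSyllableList.isReduced, fun x hx y hy hxy => ?_⟩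
  exfalso
  have hy0 : y.1 = 0 := by
    cases l with
    | nil => simp [blockWord, blockSyllables, FreeGroup.syllableWord] at hy
    | cons p l =>
      obtain ⟨k, -, hk⟩ := FreeGroup.exists_syllable_eq (0 : Fin 2) (hl p (by simp)).1
      rw [blockWord_cons, hk] at hy
      simp [List.replicate_succ] at hy
      rw [← hy]
  have hx1 : x.1 = 1 := by
    rcases List.eq_nil_or_concat l with rfl | ⟨l, p, rfl⟩
    · simp [blockWord, blockSyllables, FreeGroup.syllableWord] at hx
    · obtain ⟨k, -, hk⟩ := FreeGroup.exists_syllable_eq (1 : Fin 2) (hl p (by simp)).2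
      rw [List.concat_eq_append, blockWord_append, blockWord_cons, hk] at hx
      simp [blockWord, blockSyllables, FreeGroup.syllableWord, List.replicate_succ',
        ← List.append_assoc] at hx
      rw [← hx]
  rw [hy0, hx1] at hxy
  exact absurd hxy (by decide)

theorem infix_flatten_replicate_of_isRotated {β : Type*} {w w' P : List β} (h : w ~r w') {N : ℕ}
    (hP : P <:+: (List.replicate N w).flatten) : P <:+: (List.replicate (N + 1) w').flatten := by
  obtain ⟨k, rfl⟩ := h.symm
  obtain ⟨s, t, rfl, hst⟩ : ∃ s t : List β, w' = s ++ t ∧ w'.rotate k = t ++ s :=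
    ⟨w'.take (k % w'.length), w'.drop (k % w'.length), (List.take_append_drop _ _).symm,
      List.rotate_eq_drop_append_take_mod⟩
  rw [hst] at hP
  refine hP.trans ⟨s, t, ?_⟩
  clear hP hst
  induction N with
  | zero => simp
  | succ N ih =>
    rw [List.replicate_succ, List.replicate_succ (n := N + 1), List.flatten_cons, List.flatten_cons,
      ← ih]
    simp

/-- Conjugate products of nonzero blocks have rotated words. -/
theorem NonzeroBlocks.isRotated {l l' : List (ℤ × ℤ)} (hl : NonzeroBlocks l)
    (hl' : NonzeroBlocks l') (h : IsConj (blockProd l) (blockProd l')) :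
    blockWord l ~r blockWord l' := by
  obtain ⟨g, hg⟩ := isConj_iff.1 h
  refine hl.isCyclicallyReduced.isRotated_of_conj g.toWord hl'.isCyclicallyReduced
    FreeGroup.isReduced_toWord ?_
  rw [mk_blockWord, mk_blockWord, FreeGroup.mk_toWord, ← hg]
  group

theorem NonzeroBlocks.not_isConj_zpow {l : List (ℤ × ℤ)} (hl : NonzeroBlocks l) (hl0 : l ≠ [])
    (i : Fin 2) {δ : ℤ} (hδ : δ = 1 ∨ δ = -1) :
    ¬ IsConj (blockProd l) (FreeGroup.of i ^ δ) := by
  intro h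
  obtain ⟨g, hg⟩ := isConj_iff.1 h
  have hword : FreeGroup.syllable i δ = [(i, decide (0 < δ))] := by
    rcases hδ with rfl | rfl <;> rfl
  have := hl.isCyclicallyReduced.isRotated_of_conj (w := FreeGroup.syllable i δ) g.toWord
    (by rw [hword]; exact .singleton) FreeGroup.isReduced_toWord (by
      rw [mk_blockWord, FreeGroup.mk_syllable, FreeGroup.mk_toWord, ← hg]
      group)
  have hlen := this.perm.length_eq
  obtain ⟨p, l, rfl⟩ := List.exists_cons_of_ne_nil hl0
  have h1 := hl p (by simp)
  rw [hword, blockWord_cons] at hlen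
  simp only [FreeGroup.syllable, List.length_append, List.length_replicate, List.length_cons,
    List.length_nil] at hlen
  omega

theorem NonzeroBlocks.mem_blockSyllables {l l' : List (ℤ × ℤ)} (hl : NonzeroBlocks l)
    (hl' : NonzeroBlocks l') (h : blockWord l ~r blockWord l') {r : Fin 2 × ℤ}
    (hr : r ∈ blockSyllables l) : r ∈ blockSyllables l' := by
  have hpow : ∀ {l : List (ℤ × ℤ)} (N : ℕ), NonzeroBlocks l →
      NonzeroBlocks (List.replicate N l).flatten := by
    intro l N hl p hp
    obtain ⟨k, hk, hp⟩ := List.mem_flatten.1 hp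
    exact hl p (List.eq_of_mem_replicate hk ▸ hp)
  have hctx : ∃ x y : Fin 2 × ℤ, [x, r, y] <:+: blockSyllables (List.replicate 3 l).flatten := by
    simp only [List.replicate, List.flatten_cons, List.flatten_nil, List.append_nil,
      blockSyllables_append]
    obtain ⟨s, t, hst⟩ := List.append_of_mem hr
    rw [hst]
    obtain ⟨s', x, hx⟩ := (List.eq_nil_or_concat (s ++ r :: t ++ s)).resolve_left (by simp)
    obtain ⟨y, t', hy⟩ := List.exists_cons_of_ne_nil (l := t ++ (s ++ r :: t)) (by simp)
    refine ⟨x, y, s', t', ?_⟩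
    rw [List.concat_eq_append] at hx
    calc s' ++ [x, r, y] ++ t' = s' ++ [x] ++ r :: (y :: t') := by simp
      _ = _ := by rw [← hx, ← hy]; simp
  obtain ⟨x, y, hxy⟩ := hctx
  obtain ⟨c, d, hc, hd, hinf⟩ := (hpow 3 hl).isSyllableList.exists_infix_word hxy
  have hinf' : [c] ++ FreeGroup.syllable r.1 r.2 ++ [d] <:+:
      blockWord (List.replicate 4 l').flatten := by
    rw [blockWord_flatten_replicate]
    refine infix_flatten_replicate_of_isRotated h ?_
    rwa [← blockWord_flatten_replicate]
  have := (hpow 4 hl').isSyllableList.mem_of_infix_word (hl.isSyllableList.2 r hr) hc hd hinf'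
  simp only [blockSyllables, List.mem_flatMap] at this ⊢
  obtain ⟨p, hp, hr⟩ := this
  obtain ⟨k, hk, hp⟩ := List.mem_flatten.1 hp
  exact ⟨p, List.eq_of_mem_replicate hk ▸ hp, hr⟩

theorem NonzeroBlocks.mem_blockSyllables_iff {l l' : List (ℤ × ℤ)} (hl : NonzeroBlocks l)
    (hl' : NonzeroBlocks l') (h : IsConj (blockProd l) (blockProd l')) (r : Fin 2 × ℤ) :
    r ∈ blockSyllables l ↔ r ∈ blockSyllables l' :=
  ⟨hl.mem_blockSyllables hl' (hl.isRotated hl' h),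
    hl'.mem_blockSyllables hl (hl.isRotated hl' h).symm⟩

theorem blockProd_append (l l' : List (ℤ × ℤ)) :
    blockProd (l ++ l') = blockProd l * blockProd l' := by
  simp [blockProd]

theorem blockProd_singleton (p : ℤ × ℤ) : blockProd [p] = ga ^ p.1 * gb ^ p.2 := by
  simp [blockProd]

theorem zero_mem_blockSyllables {l : List (ℤ × ℤ)} {n : ℤ} :
    ((0, n) : Fin 2 × ℤ) ∈ blockSyllables l ↔ ∃ p ∈ l, p.1 = n := by
  simp [blockSyllables, eq_comm]

theorem one_mem_blockSyllables {l : List (ℤ × ℤ)} {n : ℤ} :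
    ((1, n) : Fin 2 × ℤ) ∈ blockSyllables l ↔ ∃ p ∈ l, p.2 = n := by
  simp [blockSyllables, eq_comm]

theorem isConj_inv_blockProd_of_snd {l : List (ℤ × ℤ)} {γ : ℤ} (h : ∀ p ∈ l, p.2 = γ) :
    IsConj (blockProd l)⁻¹ (blockProd (l.map (-·)).reverse) := by
  refine isConj_iff.2 ⟨gb ^ γ, ?_⟩
  induction l with
  | nil => simp [blockProd]
  | cons p l ih =>
    have hp := h p (by simp)
    rw [List.map_cons, List.reverse_cons, blockProd_append, ← ih fun q hq => h q (by simp [hq]),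
      blockProd_singleton, ← List.singleton_append, blockProd_append, blockProd_singleton,
      Prod.fst_neg, Prod.snd_neg, hp]
    group

theorem isConj_inv_blockProd_of_fst {l : List (ℤ × ℤ)} {δ : ℤ} (h : ∀ p ∈ l, p.1 = δ) :
    IsConj (blockProd l)⁻¹ (blockProd (l.map (-·)).reverse) := by
  refine isConj_iff.2 ⟨(ga ^ δ)⁻¹, ?_⟩
  induction l using List.reverseRecOn with
  | nil => simp [blockProd]
  | append_singleton l p ih =>
    have hp := h p (by simp)
    rw [List.map_append, List.reverse_append, blockProd_append l,
      blockProd_append (List.reverse _), ← ih fun q hq => h q (by simp [hq]), List.map_singleton,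
      List.reverse_singleton, blockProd_singleton, blockProd_singleton, Prod.fst_neg,
      Prod.snd_neg, hp]
    group

/-- The syllables of a block product conjugate to `(blockProd l')^±1`, when one of the two
exponents is constant along `l'`. -/
theorem NonzeroBlocks.exists_sign {l l' : List (ℤ × ℤ)} (hl : NonzeroBlocks l)
    (hl' : NonzeroBlocks l') (hc : (∃ γ, ∀ p ∈ l', p.2 = γ) ∨ ∃ δ, ∀ p ∈ l', p.1 = δ)
    (h : IsConj (blockProd l) (blockProd l') ∨ IsConj (blockProd l) (blockProd l')⁻¹) :
    ∃ ε : ℤ, (ε = 1 ∨ ε = -1) ∧ (∀ n, (∃ p ∈ l, p.1 = n) ↔ ∃ p ∈ l', p.1 = ε * n) ∧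
      ∀ n, (∃ p ∈ l, p.2 = n) ↔ ∃ p ∈ l', p.2 = ε * n := by
  rcases h with h | h
  · refine ⟨1, .inl rfl, fun n => ?_, fun n => ?_⟩
    · rw [one_mul]
      simpa only [zero_mem_blockSyllables] using hl.mem_blockSyllables_iff hl' h (0, n)
    · rw [one_mul]
      simpa only [one_mem_blockSyllables] using hl.mem_blockSyllables_iff hl' h (1, n)
  · have hneg : NonzeroBlocks (l'.map (-·)).reverse := by
      intro p hp
      simp only [List.mem_reverse, List.mem_map] at hp
      obtain ⟨q, hq, rfl⟩ := hp
      simpa using hl' q hq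
    have h' := h.trans (hc.elim (fun ⟨_, hc⟩ => isConj_inv_blockProd_of_snd hc)
      fun ⟨_, hc⟩ => isConj_inv_blockProd_of_fst hc)
    refine ⟨-1, .inr rfl, fun n => ?_, fun n => ?_⟩
    · have := hl.mem_blockSyllables_iff hneg h' (0, n)
      rw [zero_mem_blockSyllables, zero_mem_blockSyllables] at this
      simp only [List.mem_reverse, List.mem_map, exists_exists_and_eq_and] at this
      simpa only [Prod.fst_neg, neg_eq_iff_eq_neg, neg_one_mul] using this
    · have := hl.mem_blockSyllables_iff hneg h' (1, n)
      rw [one_mem_blockSyllables, one_mem_blockSyllables] at this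
      simp only [List.mem_reverse, List.mem_map, exists_exists_and_eq_and] at this
      simpa only [Prod.snd_neg, neg_eq_iff_eq_neg, neg_one_mul] using this

/-- The exponents in `l` are `γ` on one side, and `δ * t` or `δ * (t + 1)` on the other. -/
def IsBlockList (f g : ℤ × ℤ → ℤ) (δ γ t : ℤ) (l : List (ℤ × ℤ)) : Prop :=
  l ≠ [] ∧ ∀ p ∈ l, g p = γ ∧ (f p = δ * t ∨ f p = δ * (t + 1))

theorem IsBlockList.append {f g : ℤ × ℤ → ℤ} {δ γ t : ℤ} {l l' : List (ℤ × ℤ)}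
    (h : IsBlockList f g δ γ t l) (h' : IsBlockList f g δ γ t l') :
    IsBlockList f g δ γ t (l ++ l') := by
  refine ⟨by simp [h.1], fun p hp => ?_⟩
  exact (List.mem_append.1 hp).elim (h.2 p) (h'.2 p)

/-- Both elements are products of blocks as in the Cohen–Metzler–Zimmermann theorem. -/
def HasBlockForm (f g : ℤ × ℤ → ℤ) (X Y : F2) : Prop :=
  ∃ δ γ t : ℤ, (δ = 1 ∨ δ = -1) ∧ (γ = 1 ∨ γ = -1) ∧ 0 < t ∧ ∃ l l' : List (ℤ × ℤ),
    X = blockProd l ∧ Y = blockProd l' ∧ IsBlockList f g δ γ t l ∧ IsBlockList f g δ γ t l' ∧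
      (∃ p ∈ l ++ l', f p = δ * t) ∧ ∃ p ∈ l ++ l', f p = δ * (t + 1)

namespace HasBlockForm

variable {f g : ℤ × ℤ → ℤ} {X Y : F2}

theorem symm (h : HasBlockForm f g X Y) : HasBlockForm f g Y X := by
  obtain ⟨δ, γ, t, hδ, hγ, ht, l, l', hX, hY, hl, hl', ⟨p, hp, hpt⟩, q, hq, hqt⟩ := h
  exact ⟨δ, γ, t, hδ, hγ, ht, l', l, hY, hX, hl', hl, ⟨p, by grind, hpt⟩, q, by grind, hqt⟩

theorem mul_right (h : HasBlockForm f g X Y) : HasBlockForm f g X (X * Y) := by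
  obtain ⟨δ, γ, t, hδ, hγ, ht, l, l', rfl, rfl, hl, hl', ⟨p, hp, hpt⟩, q, hq, hqt⟩ := h
  exact ⟨δ, γ, t, hδ, hγ, ht, l, l ++ l', rfl, (blockProd_append l l').symm, hl, hl.append hl',
    ⟨p, by grind, hpt⟩, q, by grind, hqt⟩

theorem mul_left (h : HasBlockForm f g X Y) : HasBlockForm f g (X * Y) Y := by
  obtain ⟨δ, γ, t, hδ, hγ, ht, l, l', rfl, rfl, hl, hl', ⟨p, hp, hpt⟩, q, hq, hqt⟩ := h
  exact ⟨δ, γ, t, hδ, hγ, ht, l ++ l', l', (blockProd_append l l').symm, rfl, hl.append hl', hl',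
    ⟨p, by grind, hpt⟩, q, by grind, hqt⟩

end HasBlockForm

theorem PositivePair.trichotomy {X Y : F2} (h : PositivePair X Y) :
    (∃ δ γ : ℤ, (δ = 1 ∨ δ = -1) ∧ (γ = 1 ∨ γ = -1) ∧ ∃ k : ℕ,
      (X = ga ^ δ ∧ Y = ga ^ (δ * k) * gb ^ γ ∨ X = ga ^ δ * gb ^ (γ * k) ∧ Y = gb ^ γ)) ∨
    HasBlockForm Prod.fst Prod.snd X Y ∨ HasBlockForm Prod.snd Prod.fst X Y := by
  induction h with
  | base δ γ hδ hγ => exact .inl ⟨δ, γ, hδ, hγ, 0, .inl ⟨rfl, by simp⟩⟩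
  | mul_right _ ih =>
    rcases ih with ⟨δ, γ, hδ, hγ, k, ⟨rfl, rfl⟩ | ⟨rfl, rfl⟩⟩ | h | h
    · refine .inl ⟨δ, γ, hδ, hγ, k + 1, .inl ⟨rfl, ?_⟩⟩
      rw [← mul_assoc, ← zpow_add]
      push_cast
      ring_nf
    · rcases k.eq_zero_or_pos with rfl | hk
      · exact .inl ⟨δ, γ, hδ, hγ, 1, .inl ⟨by simp, by simp⟩⟩
      · refine .inr (.inr ⟨γ, δ, k, hγ, hδ, by omega, [(δ, γ * k)], [(δ, γ * (k + 1))],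
          (blockProd_singleton (δ, γ * k)).symm, ?_, by simp [IsBlockList], by simp [IsBlockList],
          by simp, by simp⟩)
        rw [blockProd_singleton, mul_assoc, ← zpow_add, mul_add, mul_one]
    · exact .inr (.inl h.mul_right)
    · exact .inr (.inr h.mul_right)
  | mul_left _ ih =>
    rcases ih with ⟨δ, γ, hδ, hγ, k, ⟨rfl, rfl⟩ | ⟨rfl, rfl⟩⟩ | h | h
    · rcases k.eq_zero_or_pos with rfl | hk
      · exact .inl ⟨δ, γ, hδ, hγ, 1, .inr ⟨by simp, by simp⟩⟩
      · refine .inr (.inl ⟨δ, γ, k, hδ, hγ, by omega, [(δ * (k + 1), γ)], [(δ * k, γ)],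
          ?_, (blockProd_singleton (δ * k, γ)).symm, by simp [IsBlockList], by simp [IsBlockList],
          by simp, by simp⟩)
        rw [blockProd_singleton, ← mul_assoc, ← zpow_add, mul_add, mul_one, add_comm]
    · refine .inl ⟨δ, γ, hδ, hγ, k + 1, .inr ⟨?_, rfl⟩⟩
      rw [mul_assoc, ← zpow_add]
      push_cast
      ring_nf
    · exact .inr (.inl h.mul_left)
    · exact .inr (.inr h.mul_left)

theorem PositivizablePair.isConj {x y u v : F2} (h : PositivizablePair x y) (hx : IsConj u x)
    (hy : IsConj v y) : ∃ X Y, PositivePair X Y ∧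
      ((IsConj u X ∨ IsConj u X⁻¹) ∧ (IsConj v Y ∨ IsConj v Y⁻¹) ∨
        (IsConj u Y ∨ IsConj u Y⁻¹) ∧ (IsConj v X ∨ IsConj v X⁻¹)) := by
  obtain ⟨X, Y, g, hp, h⟩ := h
  have key : ∀ {w z Z : F2}, IsConj w z → EqOrInv Z (g⁻¹ * z * g) →
      IsConj w Z ∨ IsConj w Z⁻¹ := by
    intro w z Z hwz hZ
    have hz : IsConj w (g⁻¹ * z * g) := hwz.trans (isConj_iff.2 ⟨g⁻¹, by group⟩)
    rcases hZ with rfl | rfl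
    · exact .inl hz
    · exact .inr (by rwa [inv_inv])
  exact ⟨X, Y, hp, h.imp (And.imp (key hx) (key hy)) (And.imp (key hx) (key hy))⟩

/-- Exponents of block products conjugate to the entries of a pair in block form. -/
theorem HasBlockForm.exists_exponents {f g : ℤ × ℤ → ℤ}
    (hfg : f = Prod.fst ∧ g = Prod.snd ∨ f = Prod.snd ∧ g = Prod.fst) {X Y : F2}
    (h : HasBlockForm f g X Y) {l l' : List (ℤ × ℤ)} (hl : NonzeroBlocks l)
    (hl' : NonzeroBlocks l') (hX : IsConj (blockProd l) X ∨ IsConj (blockProd l) X⁻¹)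
    (hY : IsConj (blockProd l') Y ∨ IsConj (blockProd l') Y⁻¹) :
    ∃ δ γ : ℤ, (δ = 1 ∨ δ = -1) ∧ (γ = 1 ∨ γ = -1) ∧
    ∃ t : ℤ, 0 < t ∧ ∃ ε : ℤ, (ε = 1 ∨ ε = -1) ∧
      (∀ p ∈ l, γ * g p = 1) ∧ (∀ p ∈ l', ε * (γ * g p) = 1) ∧
        {x : ℤ | (∃ p ∈ l, x = δ * f p) ∨ ∃ p ∈ l', x = ε * (δ * f p)} = {t, t + 1} := by
  obtain ⟨δ, γ, t, hδ, hγ, ht, L, L', rfl, rfl, hL, hL', hpt, hqt⟩ := h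
  have hnz : ∀ {M : List (ℤ × ℤ)}, IsBlockList f g δ γ t M → NonzeroBlocks M := by
    intro M hM p hp
    have hpM := hM.2 p hp
    have h1 : δ * t ≠ 0 := mul_ne_zero (by omega) (by omega)
    have h2 : δ * (t + 1) ≠ 0 := mul_ne_zero (by omega) (by omega)
    rcases hfg with ⟨rfl, rfl⟩ | ⟨rfl, rfl⟩ <;> omega
  have hsign : ∀ {M N : List (ℤ × ℤ)}, NonzeroBlocks M → IsBlockList f g δ γ t N →
      IsConj (blockProd M) (blockProd N) ∨ IsConj (blockProd M) (blockProd N)⁻¹ →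
      ∃ ε : ℤ, (ε = 1 ∨ ε = -1) ∧ (∀ n, (∃ p ∈ M, f p = n) ↔ ∃ p ∈ N, f p = ε * n) ∧
        ∀ n, (∃ p ∈ M, g p = n) ↔ ∃ p ∈ N, g p = ε * n := by
    intro M N hM hN hMN
    rcases hfg with ⟨rfl, rfl⟩ | ⟨rfl, rfl⟩
    · exact hM.exists_sign (hnz hN) (.inl ⟨γ, fun p hp => (hN.2 p hp).1⟩) hMN
    · obtain ⟨ε, hε, h1, h2⟩ :=
        hM.exists_sign (hnz hN) (.inr ⟨γ, fun p hp => (hN.2 p hp).1⟩) hMN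
      exact ⟨ε, hε, h2, h1⟩
  obtain ⟨ε₁, hε₁, hf₁, hg₁⟩ := hsign hl hL hX
  obtain ⟨ε₂, hε₂, hf₂, hg₂⟩ := hsign hl' hL' hY
  have hsq : ∀ {z : ℤ}, z = 1 ∨ z = -1 → z * z = 1 := by rintro z (rfl | rfl) <;> rfl
  have hmul : ∀ {z w : ℤ}, z = 1 ∨ z = -1 → w = 1 ∨ w = -1 → z * w = 1 ∨ z * w = -1 := by
    rintro z w (rfl | rfl) (rfl | rfl) <;> simp
  have e1 := hsq hε₁
  have e2 := hsq hε₂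
  have e3 := hsq hδ
  have e4 := hsq hγ
  refine ⟨ε₁ * δ, ε₁ * γ, hmul hε₁ hδ, hmul hε₁ hγ, t, ht, ε₁ * ε₂, hmul hε₁ hε₂, ?_, ?_, ?_⟩
  · intro p hp
    obtain ⟨P, hP, h⟩ := (hg₁ (g p)).1 ⟨p, hp, rfl⟩
    rw [(hL.2 P hP).1] at h
    rw [mul_right_comm, ← h, e4]
  · intro p hp
    obtain ⟨P, hP, h⟩ := (hg₂ (g p)).1 ⟨p, hp, rfl⟩
    rw [(hL'.2 P hP).1] at h
    grind
  · ext x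
    simp only [Set.mem_ofPred_eq, Set.mem_insert_iff, Set.mem_singleton_iff]
    constructor
    · rintro (⟨p, hp, rfl⟩ | ⟨p, hp, rfl⟩)
      · obtain ⟨P, hP, h⟩ := (hf₁ (f p)).1 ⟨p, hp, rfl⟩
        refine (hL.2 P hP).2.imp (fun h' => ?_) fun h' => ?_ <;> grind
      · obtain ⟨P, hP, h⟩ := (hf₂ (f p)).1 ⟨p, hp, rfl⟩
        refine (hL'.2 P hP).2.imp (fun h' => ?_) fun h' => ?_ <;> grind
    · intro hx
      have : ∃ p ∈ L ++ L', f p = δ * x := by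
        rcases hx with rfl | rfl
        · exact hpt
        · exact hqt
      obtain ⟨P, hP, hPx⟩ := this
      rcases List.mem_append.1 hP with hP | hP
      · obtain ⟨p, hp, h⟩ := (hf₁ (ε₁ * (δ * x))).2 ⟨P, hP, by grind⟩
        exact .inl ⟨p, hp, by grind⟩
      · obtain ⟨p, hp, h⟩ := (hf₂ (ε₂ * (δ * x))).2 ⟨P, hP, by grind⟩
        exact .inr ⟨p, hp, by grind⟩

/-- Two block products whose conjugates form a basis are conjugate to a pair in block form. -/
theorem exists_hasBlockForm {l l' : List (ℤ × ℤ)} (hl : NonzeroBlocks l)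
    (hl' : NonzeroBlocks l') (hl0 : l ≠ []) (hl0' : l' ≠ []) {x y : F2} (h : IsBasis x y)
    (hx : IsConj (blockProd l) x) (hy : IsConj (blockProd l') y) :
    ∃ X Y, (HasBlockForm Prod.fst Prod.snd X Y ∨ HasBlockForm Prod.snd Prod.fst X Y) ∧
      (IsConj (blockProd l) X ∨ IsConj (blockProd l) X⁻¹) ∧
        (IsConj (blockProd l') Y ∨ IsConj (blockProd l') Y⁻¹) := by
  obtain ⟨X, Y, hXY, hc⟩ := h.generatingPair.positivizablePair.isConj hx hy
  have hnot : ∀ {M : List (ℤ × ℤ)}, NonzeroBlocks M → M ≠ [] → ∀ (i : Fin 2) {δ : ℤ},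
      δ = 1 ∨ δ = -1 →
      ¬ (IsConj (blockProd M) (FreeGroup.of i ^ δ) ∨
        IsConj (blockProd M) (FreeGroup.of i ^ δ)⁻¹) := by
    rintro M hM hM0 i δ hδ (h | h)
    · exact hM.not_isConj_zpow hM0 i hδ h
    · rw [← zpow_neg] at h
      exact hM.not_isConj_zpow hM0 i (by omega) h
  rcases hXY.trichotomy with ⟨δ, γ, hδ, hγ, k, ⟨rfl, -⟩ | ⟨-, rfl⟩⟩ | h
  · rcases hc with hc | hc
    · exact absurd hc.1 (hnot hl hl0 0 hδ)
    · exact absurd hc.2 (hnot hl' hl0' 0 hδ)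
  · rcases hc with hc | hc
    · exact absurd hc.2 (hnot hl' hl0' 1 hγ)
    · exact absurd hc.1 (hnot hl hl0 1 hγ)
  · rcases hc with hc | hc
    · exact ⟨X, Y, h, hc⟩
    · exact ⟨Y, X, h.imp HasBlockForm.symm HasBlockForm.symm, hc⟩

/-- Cohen–Metzler–Zimmermann: if cyclically reduced words
`u = a^{n₁} b^{m₁} ⋯ a^{n_p} b^{m_p}` and `v = a^{r₁} b^{s₁} ⋯ a^{r_q} b^{s_q}`
(all exponents nonzero) have conjugates forming a basis of `F₂`, then after possibly
replacing `a` by `a⁻¹` (sign `δ`) or `b` by `b⁻¹` (sign `γ`) throughout, there are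
`t > 0` and `ε = ±1` such that either all `b`-exponents equal 1 (resp. `ε`) and the
`a`-exponents form the set `{t, t+1}`, or symmetrically. -/
theorem cohen_metzler_zimmermann (p q : ℕ) (hp : 1 ≤ p) (hq : 1 ≤ q)
    (n m : Fin p → ℤ) (r s : Fin q → ℤ)
    (hn : ∀ i, n i ≠ 0) (hm : ∀ i, m i ≠ 0) (hr : ∀ j, r j ≠ 0) (hs : ∀ j, s j ≠ 0)
    (u v : F2)
    (hu : u = (List.ofFn fun i => ga ^ (n i) * gb ^ (m i)).prod)
    (hv : v = (List.ofFn fun j => ga ^ (r j) * gb ^ (s j)).prod)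
    (hucr : CyclicallyReduced u.toWord) (hvcr : CyclicallyReduced v.toWord)
    (hbasis : ∃ g h : F2, IsBasis (g⁻¹ * u * g) (h⁻¹ * v * h)) :
    ∃ δ γ : ℤ, (δ = 1 ∨ δ = -1) ∧ (γ = 1 ∨ γ = -1) ∧
    ∃ t : ℤ, 0 < t ∧ ∃ ε : ℤ, (ε = 1 ∨ ε = -1) ∧
      (((∀ i, γ * m i = 1) ∧ (∀ j, ε * (γ * s j) = 1) ∧
        ({x : ℤ | (∃ i, x = δ * n i) ∨ ∃ j, x = ε * (δ * r j)} = {t, t + 1})) ∨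
       ((∀ i, δ * n i = 1) ∧ (∀ j, ε * (δ * r j) = 1) ∧
        ({x : ℤ | (∃ i, x = γ * m i) ∨ ∃ j, x = ε * (γ * s j)} = {t, t + 1}))) := by
  obtain ⟨g, h, hb⟩ := hbasis
  have hblock : ∀ {k : ℕ} (c d : Fin k → ℤ),
      (List.ofFn fun i => ga ^ (c i) * gb ^ (d i)).prod =
        blockProd (List.ofFn fun i => (c i, d i)) := by
    intro k c d
    rw [blockProd, List.map_ofFn]
    rfl
  have hex : ∀ {k : ℕ} (c : Fin k → ℤ × ℤ) (P : ℤ × ℤ → Prop),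
      (∃ x ∈ List.ofFn c, P x) ↔ ∃ i, P (c i) := by
    intro k c P
    simp only [List.mem_ofFn', Set.exists_range_iff]
  rw [hblock] at hu hv
  have hl : NonzeroBlocks (List.ofFn fun i => (n i, m i)) := by
    intro x hx
    obtain ⟨i, rfl⟩ := List.mem_ofFn.1 hx
    exact ⟨hn i, hm i⟩
  have hl' : NonzeroBlocks (List.ofFn fun j => (r j, s j)) := by
    intro x hx
    obtain ⟨j, rfl⟩ := List.mem_ofFn.1 hx
    exact ⟨hr j, hs j⟩
  subst hu hv
  obtain ⟨X, Y, hform, hX, hY⟩ := exists_hasBlockForm hl hl'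
    (by rw [Ne, List.ofFn_eq_nil_iff]; omega) (by rw [Ne, List.ofFn_eq_nil_iff]; omega) hb
    (isConj_iff.2 ⟨g⁻¹, by group⟩) (isConj_iff.2 ⟨h⁻¹, by group⟩)
  rcases hform with hform | hform
  · obtain ⟨δ, γ, hδ, hγ, t, ht, ε, hε, h1, h2, h3⟩ :=
      hform.exists_exponents (.inl ⟨rfl, rfl⟩) hl hl' hX hY
    simp only [List.forall_mem_ofFn_iff, hex] at h1 h2 h3
    exact ⟨δ, γ, hδ, hγ, t, ht, ε, hε, .inl ⟨h1, h2, h3⟩⟩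
  · obtain ⟨δ, γ, hδ, hγ, t, ht, ε, hε, h1, h2, h3⟩ :=
      hform.exists_exponents (.inr ⟨rfl, rfl⟩) hl hl' hX hY
    simp only [List.forall_mem_ofFn_iff, hex] at h1 h2 h3
    exact ⟨γ, δ, hγ, hδ, t, ht, ε, hε, .inr ⟨h1, h2, h3⟩⟩
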